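/- Let α ∈ ℂ∖ℤ. The Lie superalgebra of exterior derivations Der_ext S'(2,α) = Der S'(2,α)/Inn S'(2,α) is one-dimensional, spanned by the class of the even derivation 𝖧 of S'(2,α) defined by 𝖧(𝔵_k) = 𝔵_k, 𝖧(𝔥_k^α) = −𝔥_k^α, 𝖧(𝔭_k) = 𝔭_k, 𝖧(𝔶_k^α) = −𝔶_k^α, and 𝖧(ℒ_n^α) = 𝖧(E_n) = 𝖧(H_n) = 𝖧(F_n) = 0. -/

import Mathlib

noncomputable section

/-- The Laurent polynomial ring `ℂ[t,t⁻¹]`, as the space of finitely supported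
functions `ℤ →₀ ℂ` (the function `f` represents `Σ_n f(n)tⁿ`). -/
abbrev Lau : Type := ℤ →₀ ℂ

/-- The supercommutative superalgebra `A = ℂ[t,t⁻¹] ⊗ Λ(θ₁,θ₂)`, an element
`(a,b,c,d)` representing `a + bθ₁ + cθ₂ + dθ₁θ₂`. -/
abbrev GA : Type := Lau × Lau × Lau × Lau

/-- The derivative `∂_t` on `ℂ[t,t⁻¹]`: `tⁿ ↦ n tⁿ⁻¹`. -/
def tder : Lau →ₗ[ℂ] Lau :=
  Finsupp.lsum ℂ fun n => (n : ℂ) • Finsupp.lsingle (n - 1)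

/-- Multiplication by `t^k` on `ℂ[t,t⁻¹]`. -/
def tshift (k : ℤ) : Lau →ₗ[ℂ] Lau := Finsupp.lmapDomain ℂ ℂ (· + k)

/-- Components of `A`. -/
def pr0 : GA →ₗ[ℂ] Lau := LinearMap.fst ℂ Lau (Lau × Lau × Lau)
def pr1 : GA →ₗ[ℂ] Lau :=
  (LinearMap.fst ℂ Lau (Lau × Lau)).comp (LinearMap.snd ℂ Lau (Lau × Lau × Lau))
def pr2 : GA →ₗ[ℂ] Lau :=
  ((LinearMap.fst ℂ Lau Lau).comp (LinearMap.snd ℂ Lau (Lau × Lau))).comp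
    (LinearMap.snd ℂ Lau (Lau × Lau × Lau))
def pr3 : GA →ₗ[ℂ] Lau :=
  ((LinearMap.snd ℂ Lau Lau).comp (LinearMap.snd ℂ Lau (Lau × Lau))).comp
    (LinearMap.snd ℂ Lau (Lau × Lau × Lau))

/-- Build an endomorphism of `A` from its four components. -/
def mk4 (f0 f1 f2 f3 : GA →ₗ[ℂ] Lau) : Module.End ℂ GA :=
  f0.prod (f1.prod (f2.prod f3))

/-- The even derivation `∂_t` of `A`. -/
def Dt : Module.End ℂ GA :=
  mk4 (tder.comp pr0) (tder.comp pr1) (tder.comp pr2) (tder.comp pr3)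

/-- The odd (left) derivation `∂₁ = ∂/∂θ₁` of `A`. -/
def Dθ1 : Module.End ℂ GA := mk4 pr1 0 pr3 0

/-- The odd (left) derivation `∂₂ = ∂/∂θ₂` of `A`. -/
def Dθ2 : Module.End ℂ GA := mk4 pr2 (-pr3) 0 0

/-- Multiplication by `θ₁` on `A`. -/
def Mθ1 : Module.End ℂ GA := mk4 0 pr0 0 pr2

/-- Multiplication by `θ₂` on `A`. -/
def Mθ2 : Module.End ℂ GA := mk4 0 0 pr0 (-pr1)

/-- Multiplication by `t^k` on `A`. -/
def Mt (k : ℤ) : Module.End ℂ GA :=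
  mk4 ((tshift k).comp pr0) ((tshift k).comp pr1) ((tshift k).comp pr2) ((tshift k).comp pr3)

/-- `ℒ_n^α = −tⁿ(t∂_t + (1/2)(n+α+1)(θ₁∂₁ + θ₂∂₂))`. -/
def Lop (α : ℂ) (n : ℤ) : Module.End ℂ GA :=
  -(Mt (n + 1) * Dt + (((n : ℂ) + α + 1) / 2) • (Mt n * (Mθ1 * Dθ1 + Mθ2 * Dθ2)))

/-- `E_n = tⁿθ₂∂₁`. -/
def Eop (n : ℤ) : Module.End ℂ GA := Mt n * Mθ2 * Dθ1

/-- `H_n = tⁿ(θ₂∂₂ − θ₁∂₁)`. -/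
def Hop (n : ℤ) : Module.End ℂ GA := Mt n * Mθ2 * Dθ2 - Mt n * Mθ1 * Dθ1

/-- `F_n = tⁿθ₁∂₂`. -/
def Fop (n : ℤ) : Module.End ℂ GA := Mt n * Mθ1 * Dθ2

/-- `𝔥_n^α = tⁿθ₂∂_t − (n+α)tⁿ⁻¹θ₁θ₂∂₁`. -/
def hop (α : ℂ) (n : ℤ) : Module.End ℂ GA :=
  Mt n * Mθ2 * Dt - ((n : ℂ) + α) • (Mt (n - 1) * Mθ1 * Mθ2 * Dθ1)

/-- `𝔭_n = −tⁿ⁺¹∂₂`. -/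
def pop (n : ℤ) : Module.End ℂ GA := -(Mt (n + 1) * Dθ2)

/-- `𝔵_n = tⁿ⁺¹∂₁`. -/
def xop (n : ℤ) : Module.End ℂ GA := Mt (n + 1) * Dθ1

/-- `𝔶_n^α = tⁿθ₁∂_t + (n+α)tⁿ⁻¹θ₁θ₂∂₂`. -/
def yop (α : ℂ) (n : ℤ) : Module.End ℂ GA :=
  Mt n * Mθ1 * Dt + ((n : ℂ) + α) • (Mt (n - 1) * Mθ1 * Mθ2 * Dθ2)

/-- The parity involution of `A = ℂ[t,t⁻¹] ⊗ Λ(θ₁,θ₂)` (identity on the even part,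
`−1` on the odd part). -/
def sigmaGA : Module.End ℂ GA := mk4 pr0 (-pr1) (-pr2) pr3

/-- The supercommutator on `End(A)`, extended bilinearly from homogeneous elements
(for homogeneous `x, y` it equals `x∘y − (−1)^{p(x)p(y)} y∘x`, parity being measured
by conjugation by the parity involution). -/
def sbr (x y : Module.End ℂ GA) : Module.End ℂ GA :=
  x * y - ((1 : ℂ) / 2) • ((y + sigmaGA * y * sigmaGA) * x)
    - ((1 : ℂ) / 2) • ((y - sigmaGA * y * sigmaGA) * (sigmaGA * x * sigmaGA))

/-- The generating set of the superalgebra `S'(2,α) ⊆ W(2)`: all the basis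
elements `ℒ_n^α, E_n, H_n, F_n, 𝔥_n^α, 𝔭_n, 𝔵_n, 𝔶_n^α`. -/
def s2Gen (α : ℂ) : Set (Module.End ℂ GA) :=
  {e | ∃ n : ℤ, e = Lop α n ∨ e = Eop n ∨ e = Hop n ∨ e = Fop n ∨
    e = hop α n ∨ e = pop n ∨ e = xop n ∨ e = yop α n}

/-- The superalgebra `S'(2,α)`, as the span of its basis inside `W(2) ⊆ End(A)`. -/
def s2Span (α : ℂ) : Submodule ℂ (Module.End ℂ GA) := Submodule.span ℂ (s2Gen α)

/-- `D` is an even derivation of `S'(2,α)`: it preserves parity and satisfies the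
Leibniz rule `D[x,y] = [Dx,y] + [x,Dy]`. -/
def IsEvenDer (α : ℂ) (D : ↥(s2Span α) →ₗ[ℂ] ↥(s2Span α)) : Prop :=
  (∀ x z : ↥(s2Span α), (z : Module.End ℂ GA) = sigmaGA * (x : Module.End ℂ GA) * sigmaGA →
    ((D z : Module.End ℂ GA)) = sigmaGA * (D x : Module.End ℂ GA) * sigmaGA) ∧
  (∀ x y z : ↥(s2Span α),
    (z : Module.End ℂ GA) = sbr (x : Module.End ℂ GA) (y : Module.End ℂ GA) →
    ((D z : Module.End ℂ GA)) = sbr (D x : Module.End ℂ GA) (y : Module.End ℂ GA)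
      + sbr (x : Module.End ℂ GA) (D y : Module.End ℂ GA))

/-- `D` is an odd derivation of `S'(2,α)`: it reverses parity and satisfies the
Leibniz rule `D[x,y] = [Dx,y] + (−1)^{p(x)}[x,Dy]`. -/
def IsOddDer (α : ℂ) (D : ↥(s2Span α) →ₗ[ℂ] ↥(s2Span α)) : Prop :=
  (∀ x z : ↥(s2Span α), (z : Module.End ℂ GA) = sigmaGA * (x : Module.End ℂ GA) * sigmaGA →
    ((D z : Module.End ℂ GA)) = -(sigmaGA * (D x : Module.End ℂ GA) * sigmaGA)) ∧
  (∀ x y z : ↥(s2Span α),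
    (z : Module.End ℂ GA) = sbr (x : Module.End ℂ GA) (y : Module.End ℂ GA) →
    ((D z : Module.End ℂ GA)) = sbr (D x : Module.End ℂ GA) (y : Module.End ℂ GA)
      + sbr (sigmaGA * (x : Module.End ℂ GA) * sigmaGA) (D y : Module.End ℂ GA))

/-- `D` is a superderivation of `S'(2,α)`: a sum of an even and an odd derivation. -/
def IsSuperDer (α : ℂ) (D : ↥(s2Span α) →ₗ[ℂ] ↥(s2Span α)) : Prop :=
  ∃ De Do, D = De + Do ∧ IsEvenDer α De ∧ IsOddDer α Do

/-- `D` is an inner derivation of `S'(2,α)`: `D = ad s` for some `s ∈ S'(2,α)`. -/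
def IsInnerDer (α : ℂ) (D : ↥(s2Span α) →ₗ[ℂ] ↥(s2Span α)) : Prop :=
  ∃ s : ↥(s2Span α), ∀ x : ↥(s2Span α),
    ((D x : Module.End ℂ GA)) = sbr (s : Module.End ℂ GA) (x : Module.End ℂ GA)

/-!
Modulo inner derivations, a derivation `D` commutes with `ad z` for `z = ℒ₀ + cH₀` with `c` generic:
if `(D z)ᵢ` is the coordinate of `D z` along the eigenvector `eᵢ` of `ad z` with eigenvalue `aᵢ`,
then `D - ad s` kills `z` for `s = -∑ aᵢ⁻¹ (D z)ᵢ eᵢ`. Here the part of `D z` with `aᵢ = 0` vanishes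
because the Leibniz rule for `[z, eᵢ]` shows that `[D z, eᵢ]` has no component along `eᵢ`.

On the eight families of basis elements the eigenvalue of `ad ℒ₀` is an integer plus `ε(α + 1)/2`
with `ε = 1` on `𝔵, 𝔭`, `ε = -1` on `𝔥, 𝔶` and `ε = 0` on the even part. As `α ∉ ℤ`, the eigenvalues
of `ad z` separate the three values of `ε` (the charge), so a derivation commuting with `ad z`
preserves the degree in `t`, the charge and the `H₀`-weight. Since the charge determines the parity,
such a derivation is zero if it is odd; if it is even it is diagonal in the given basis, and the
additivity of its eigenvalues along the bracket leaves only the combinations of `ad ℒ₀`, `ad H₀` and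
the charge derivation `𝖧`. The latter is induced by `-(θ₁∂₁ + θ₂∂₂)`, which is not in `S'(2,α)`.
-/

section Diagonal

variable {ι R M : Type*} [CommRing R] [AddCommGroup M] [Module R M] (b : Module.Basis ι R M)

lemma repr_apply_of_forall_apply_eq_smul {A : M →ₗ[R] M} {a : ι → R}
    (hA : ∀ i, A (b i) = a i • b i) (v : M) (i : ι) : b.repr (A v) i = a i * b.repr v i := by
  suffices b.coord i ∘ₗ A = a i • b.coord i from LinearMap.congr_fun this v
  refine b.ext fun j => ?_
  by_cases hij : j = i <;> simp [hA, hij]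

lemma apply_eq_smul_of_repr_eq_zero {D : M →ₗ[R] M} {j : ι}
    (hD : ∀ i, i ≠ j → b.repr (D (b j)) i = 0) : D (b j) = b.repr (D (b j)) j • b j := by
  refine b.ext_elem fun i => ?_
  by_cases hij : i = j
  · simp [hij]
  · simp [hD i hij, Ne.symm hij]

lemma repr_apply_eq_zero_of_intertwines [NoZeroDivisors R] {A A' D : M →ₗ[R] M} {a a' : ι → R}
    (hA : ∀ i, A (b i) = a i • b i) (hA' : ∀ i, A' (b i) = a' i • b i)
    (hD : ∀ v, D (A v) = A' (D v)) {i j : ι} (hij : a j ≠ a' i) : b.repr (D (b j)) i = 0 := by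
  have h : a j * b.repr (D (b j)) i = a' i * b.repr (D (b j)) i := by
    simpa [hA, repr_apply_of_forall_apply_eq_smul b hA'] using
      DFunLike.congr_fun (congrArg b.repr (hD (b j))) i
  exact (mul_eq_mul_right_iff.mp h).resolve_left hij

end Diagonal

lemma exists_forall_add_mul_injective {ι K : Type*} [Field K] [Countable ι] [Uncountable K]
    (u v : ι → K) : ∃ c : K, ∀ i j, u i + c * v i = u j + c * v j → u i = u j ∧ v i = v j := by
  let slope : ι × ι → K := fun ij => (u ij.2 - u ij.1) / (v ij.1 - v ij.2)
  obtain ⟨c, hc⟩ : ∃ c, c ∉ Set.range slope := by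
    by_contra! h
    exact not_countable (Function.Surjective.countable (f := slope) h)
  refine ⟨c, fun i j hij => ?_⟩
  have hv : v i = v j := by
    by_contra hne
    refine hc ⟨(i, j), ?_⟩
    rw [div_eq_iff (sub_ne_zero.mpr hne)]
    linear_combination -hij
  exact ⟨by simpa [hv] using hij, hv⟩

section Superderivation

variable {K V : Type*} [CommRing K] [AddCommGroup V] [Module K V]

/-- `D` is a superderivation of parity `p` (mod `2`) of the superalgebra with product `B` and
parity involution `σ`; the sign `(-1)^{p(D)p(x)}` of the Leibniz rule is encoded by `σ ^ p`. -/
structure IsSuperderivation (B : V →ₗ[K] V →ₗ[K] V) (σ : Module.End K V) (p : ℕ)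
    (D : Module.End K V) : Prop where
  apply_parity : ∀ x, D (σ x) = (-1 : K) ^ p • σ (D x)
  leibniz : ∀ x y, D (B x y) = B (D x) y + B ((σ ^ p) x) (D y)

namespace IsSuperderivation

variable {B : V →ₗ[K] V →ₗ[K] V} {σ D D' : Module.End K V} {p : ℕ} {x y z : V}

lemma sub (hD : IsSuperderivation B σ p D) (hD' : IsSuperderivation B σ p D') :
    IsSuperderivation B σ p (D - D') where
  apply_parity x := by simp [hD.apply_parity, hD'.apply_parity, smul_sub]
  leibniz x y := by
    simp only [LinearMap.sub_apply, hD.leibniz, hD'.leibniz, map_sub]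
    abel

lemma apply_mul_of_eigen {a c : K} (hD : IsSuperderivation B σ 0 D) (hx : D x = a • x)
    (hy : D y = c • y) : D (B x y) = (a + c) • B x y := by
  simp [hD.leibniz, hx, hy, add_smul]

lemma apply_mul_of_fixed (hD : IsSuperderivation B σ p D) (hz : σ z = z) (x : V) :
    D (B z x) = B (D z) x + B z (D x) := by
  have hpow : (σ ^ p) z = z := by
    simpa [Module.End.pow_apply] using Function.iterate_fixed hz p
  rw [hD.leibniz, hpow]

lemma parity_apply_of_fixed (hD : IsSuperderivation B σ p D) (hz : σ z = z) :
    σ (D z) = (-1 : K) ^ p • D z := by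
  have h := congrArg ((-1 : K) ^ p • ·) (hD.apply_parity z)
  simpa [hz, smul_smul, ← mul_pow] using h.symm

lemma eigenvalue_eq_add [NoZeroDivisors K] {ι : Type*} (b : Module.Basis ι K V)
    (hD : IsSuperderivation B σ 0 D) {k : ι} {r a c : K}
    (hk : ∀ v, b.repr (D v) k = r * b.repr v k) (hx : D x = a • x) (hy : D y = c • y)
    (hxy : b.repr (B x y) k ≠ 0) : r = a + c := by
  refine mul_right_cancel₀ hxy ?_
  rw [← hk, hD.apply_mul_of_eigen hx hy, map_smul, Finsupp.smul_apply, smul_eq_mul]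

lemma repr_mul_apply_self_eq_zero {ι : Type*} {a : ι → K} (b : Module.Basis ι K V)
    (hD : IsSuperderivation B σ p D) (hz : σ z = z) (ha : ∀ i, B z (b i) = a i • b i) (i : ι) :
    b.repr (B (D z) (b i)) i = 0 := by
  have h := DFunLike.congr_fun (congrArg b.repr (hD.apply_mul_of_fixed hz (b i))) i
  simpa [ha, repr_apply_of_forall_apply_eq_smul b ha] using h

end IsSuperderivation

end Superderivation

namespace IsSuperderivation

variable {ι K V : Type*} [Field K] [AddCommGroup V] [Module K V]
  {B : V →ₗ[K] V →ₗ[K] V} {σ D : Module.End K V} {p : ℕ} {z : V} {a sgn : ι → K}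

/-- The inner derivation is `ad s` with `s = -∑ aᵢ⁻¹ (D z)ᵢ bᵢ`. -/
lemma exists_apply_eq_mul (b : Module.Basis ι K V) (hD : IsSuperderivation B σ p D)
    (hz : σ z = z) (hσ : ∀ i, σ (b i) = sgn i • b i) (ha : ∀ i, B z (b i) = a i • b i)
    (hskew : ∀ x, B x z = -B z x) (h0 : ∀ i, a i = 0 → b.repr (D z) i = 0) :
    ∃ s, σ s = (-1 : K) ^ p • s ∧ D z = B s z := by
  let R : Module.End K V := b.constr K fun i => -(a i)⁻¹ • b i
  have hR (i) : R (b i) = -(a i)⁻¹ • b i := b.constr_basis K _ i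
  have hσR : σ ∘ₗ R = R ∘ₗ σ := b.ext fun i => by simp [hR, hσ, smul_smul, mul_comm]
  refine ⟨R (D z), ?_, b.ext_elem fun i => ?_⟩
  · rw [← LinearMap.comp_apply, hσR, LinearMap.comp_apply, hD.parity_apply_of_fixed hz, map_smul]
  · rw [hskew, map_neg, Finsupp.neg_apply, repr_apply_of_forall_apply_eq_smul b ha,
      repr_apply_of_forall_apply_eq_smul b hR]
    by_cases hai : a i = 0
    · simp [hai, h0 i hai]
    · field_simp

lemma exists_sub_ad_commute (b : Module.Basis ι K V) (hD : IsSuperderivation B σ p D)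
    (had : ∀ s, σ s = (-1 : K) ^ p • s → IsSuperderivation B σ p (B s))
    (hz : σ z = z) (hσ : ∀ i, σ (b i) = sgn i • b i) (ha : ∀ i, B z (b i) = a i • b i)
    (hskew : ∀ x, B x z = -B z x) (h0 : ∀ i, a i = 0 → b.repr (D z) i = 0) :
    ∃ s, IsSuperderivation B σ p (D - B s) ∧ ∀ x, (D - B s) (B z x) = B z ((D - B s) x) := by
  obtain ⟨s, hs, hDz⟩ := hD.exists_apply_eq_mul b hz hσ ha hskew h0
  have hD' := hD.sub (had s hs)
  exact ⟨s, hD', fun x => by simp [hD'.apply_mul_of_fixed hz, hDz]⟩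

end IsSuperderivation

section Supercommutator

variable {K A : Type*} [Field K] [Ring A] [Algebra K A] {σ : A}

variable (K σ) in
/-- The parity involution `x ↦ σxσ` on the operators of a superspace whose own parity involution
is `σ`. -/
def parityConj : Module.End K A := LinearMap.mulLeftRight K (σ, σ)

variable (K σ) in
/-- The supercommutator `xy - (-1)^{p(x)p(y)} yx`, extended bilinearly from homogeneous elements by
splitting `y` into its even part `(y + σyσ)/2` and its odd part `(y - σyσ)/2`. -/
def superCommutator : A →ₗ[K] A →ₗ[K] A :=
  LinearMap.mul K A
    - (1 / 2 : K) • (LinearMap.mul K A ∘ₗ (1 + parityConj K σ)).flip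
    - (1 / 2 : K) • (LinearMap.mul K A ∘ₗ (1 - parityConj K σ)).flip ∘ₗ parityConj K σ

lemma superCommutator_apply (x y : A) :
    superCommutator K σ x y = x * y - (1 / 2 : K) • ((y + parityConj K σ y) * x)
      - (1 / 2 : K) • ((y - parityConj K σ y) * parityConj K σ x) := rfl

lemma parityConj_mul (hσ : σ * σ = 1) (x y : A) :
    parityConj K σ (x * y) = parityConj K σ x * parityConj K σ y := by
  calc σ * (x * y) * σ = σ * x * 1 * (y * σ) := by noncomm_ring
    _ = σ * x * σ * (σ * y * σ) := by rw [← hσ]; noncomm_ring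

lemma parityConj_parityConj (hσ : σ * σ = 1) (x : A) :
    parityConj K σ (parityConj K σ x) = x := by
  calc σ * (σ * x * σ) * σ = σ * σ * x * (σ * σ) := by noncomm_ring
    _ = x := by simp [hσ]

lemma parityConj_superCommutator (hσ : σ * σ = 1) (x y : A) :
    parityConj K σ (superCommutator K σ x y)
      = superCommutator K σ (parityConj K σ x) (parityConj K σ y) := by
  simp only [superCommutator_apply, map_sub, map_smul, map_add, parityConj_mul hσ]

variable [NeZero (2 : K)]

lemma superCommutator_apply_of_even {x : A} (hx : parityConj K σ x = x) (y : A) :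
    superCommutator K σ x y = x * y - y * x := by
  rw [superCommutator_apply, hx, add_mul, sub_mul]
  match_scalars <;> field_simp <;> ring

lemma superCommutator_apply_of_odd {x : A} (hx : parityConj K σ x = -x) (y : A) :
    superCommutator K σ x y = x * y - parityConj K σ y * x := by
  rw [superCommutator_apply, hx, add_mul, sub_mul, mul_neg, mul_neg]
  match_scalars <;> field_simp <;> ring

lemma superCommutator_eq_neg_of_even {y : A} (hy : parityConj K σ y = y) (x : A) :
    superCommutator K σ x y = -superCommutator K σ y x := by
  rw [superCommutator_apply_of_even hy, superCommutator_apply, hy, sub_self, zero_mul, add_mul]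
  match_scalars <;> field_simp
  ring

lemma isSuperderivation_superCommutator_even (hσ : σ * σ = 1) {s : A}
    (hs : parityConj K σ s = s) :
    IsSuperderivation (superCommutator K σ) (parityConj K σ) 0 (superCommutator K σ s) where
  apply_parity x := by simp [parityConj_superCommutator hσ, hs]
  leibniz x y := by
    rw [pow_zero, Module.End.one_apply, superCommutator_apply x y,
      superCommutator_apply (superCommutator K σ s x), superCommutator_apply x]
    simp only [superCommutator_apply_of_even hs, map_sub, parityConj_mul hσ, hs, mul_sub, sub_mul,
      mul_add, add_mul, mul_smul_comm, smul_mul_assoc, mul_assoc]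
    module

lemma isSuperderivation_superCommutator_odd (hσ : σ * σ = 1) {s : A}
    (hs : parityConj K σ s = -s) :
    IsSuperderivation (superCommutator K σ) (parityConj K σ) 1 (superCommutator K σ s) where
  apply_parity x := by simp [parityConj_superCommutator hσ, hs]
  leibniz x y := by
    rw [pow_one, superCommutator_apply x y, superCommutator_apply (superCommutator K σ s x),
      superCommutator_apply (parityConj K σ x)]
    simp only [superCommutator_apply_of_odd hs, map_sub, map_smul, map_add, parityConj_mul hσ,
      parityConj_parityConj hσ, hs, mul_sub, sub_mul, mul_add, add_mul, mul_smul_comm,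
      smul_mul_assoc, mul_assoc, mul_neg, neg_mul]
    module

end Supercommutator

lemma sigmaGA_mul_sigmaGA : sigmaGA * sigmaGA = 1 :=
  LinearMap.ext fun v => by simp [sigmaGA, mk4, pr0, pr1, pr2, pr3]

lemma parityConj_sigmaGA (x : Module.End ℂ GA) :
    parityConj ℂ sigmaGA x = sigmaGA * x * sigmaGA := rfl

section Basis

/-- The eight families of basis elements of `S'(2,α)`. -/
inductive Family
  | L | E | H | F | x | p | h | y
  deriving DecidableEq

instance : Fintype Family where
  elems := {.L, .E, .H, .F, .x, .p, .h, .y}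
  complete g := by cases g <;> simp

/-- The basis elements of `S'(2,α)`, indexed by family and by degree in `t`: the indices of
`𝔵, 𝔭` and of `𝔥, 𝔶` are shifted by `∓1` so that the bracket is graded. -/
def gen (α : ℂ) (n : ℤ) : Family → Module.End ℂ GA
  | .L => Lop α n
  | .E => Eop n
  | .H => Hop n
  | .F => Fop n
  | .x => xop (n - 1)
  | .p => pop (n - 1)
  | .h => hop α (n + 1)
  | .y => yop α (n + 1)

lemma gen_x (α : ℂ) (k : ℤ) : gen α (k + 1) .x = xop k := by simp [gen]

lemma gen_p (α : ℂ) (k : ℤ) : gen α (k + 1) .p = pop k := by simp [gen]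

lemma gen_h (α : ℂ) (k : ℤ) : gen α (k - 1) .h = hop α k := by simp [gen]

lemma gen_y (α : ℂ) (k : ℤ) : gen α (k - 1) .y = yop α k := by simp [gen]

/-- The element of degree `n` of `S'(2,α)` with coordinates `v`. -/
def homog (α : ℂ) (n : ℤ) : (Family → ℂ) →ₗ[ℂ] Module.End ℂ GA :=
  Fintype.linearCombination ℂ (gen α n)

lemma homog_apply (α : ℂ) (n : ℤ) (v : Family → ℂ) :
    homog α n v = v .L • Lop α n + v .E • Eop n + v .H • Hop n + v .F • Fop n + v .x • xop (n - 1)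
      + v .p • pop (n - 1) + v .h • hop α (n + 1) + v .y • yop α (n + 1) := by
  have huniv : (Finset.univ : Finset Family) = {.L, .E, .H, .F, .x, .p, .h, .y} := rfl
  simp [homog, Fintype.linearCombination_apply, huniv, gen, ← add_assoc]

/-- The element `tᵏ(a + bθ₁ + cθ₂ + dθ₁θ₂)` of `A`. -/
def gaHomog (k : ℤ) (a b c d : ℂ) : GA :=
  (Finsupp.single k a, Finsupp.single k b, Finsupp.single k c, Finsupp.single k d)

lemma end_ext_gaHomog {S T : Module.End ℂ GA}
    (h : ∀ k a b c d, S (gaHomog k a b c d) = T (gaHomog k a b c d)) : S = T := by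
  have h0 (k) : S (Finsupp.single k 1, 0, 0, 0) = T (Finsupp.single k 1, 0, 0, 0) := by
    simpa [gaHomog] using h k 1 0 0 0
  have h1 (k) : S (0, Finsupp.single k 1, 0, 0) = T (0, Finsupp.single k 1, 0, 0) := by
    simpa [gaHomog] using h k 0 1 0 0
  have h2 (k) : S (0, 0, Finsupp.single k 1, 0) = T (0, 0, Finsupp.single k 1, 0) := by
    simpa [gaHomog] using h k 0 0 1 0
  have h3 (k) : S (0, 0, 0, Finsupp.single k 1) = T (0, 0, 0, Finsupp.single k 1) := by
    simpa [gaHomog] using h k 0 0 0 1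
  exact LinearMap.prod_ext (Finsupp.lhom_ext' fun k => LinearMap.ext_ring (h0 k)) <|
    LinearMap.prod_ext (Finsupp.lhom_ext' fun k => LinearMap.ext_ring (h1 k)) <|
    LinearMap.prod_ext (Finsupp.lhom_ext' fun k => LinearMap.ext_ring (h2 k))
      (Finsupp.lhom_ext' fun k => LinearMap.ext_ring (h3 k))

section Action

variable (α : ℂ) (n k : ℤ) (v : Family → ℂ) (r a b c d a' b' c' d' : ℂ)

lemma gaHomog_add :
    gaHomog k a b c d + gaHomog k a' b' c' d' = gaHomog k (a + a') (b + b') (c + c') (d + d') := by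
  simp [gaHomog]

lemma gaHomog_sub :
    gaHomog k a b c d - gaHomog k a' b' c' d' = gaHomog k (a - a') (b - b') (c - c') (d - d') := by
  simp [gaHomog]

lemma gaHomog_neg : -gaHomog k a b c d = gaHomog k (-a) (-b) (-c) (-d) := by
  simp [gaHomog]

lemma gaHomog_smul : r • gaHomog k a b c d = gaHomog k (r * a) (r * b) (r * c) (r * d) := by
  simp [gaHomog]

lemma Mt_gaHomog : Mt n (gaHomog k a b c d) = gaHomog (k + n) a b c d := by
  simp [Mt, gaHomog, mk4, pr0, pr1, pr2, pr3, tshift]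

lemma Dt_gaHomog : Dt (gaHomog k a b c d) = gaHomog (k - 1) (k * a) (k * b) (k * c) (k * d) := by
  simp [Dt, gaHomog, mk4, pr0, pr1, pr2, pr3, tder]

lemma Dθ1_gaHomog : Dθ1 (gaHomog k a b c d) = gaHomog k b 0 d 0 := by
  simp [Dθ1, gaHomog, mk4, pr1, pr3]

lemma Dθ2_gaHomog : Dθ2 (gaHomog k a b c d) = gaHomog k c (-d) 0 0 := by
  simp [Dθ2, gaHomog, mk4, pr2, pr3]

lemma Mθ1_gaHomog : Mθ1 (gaHomog k a b c d) = gaHomog k 0 a 0 c := by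
  simp [Mθ1, gaHomog, mk4, pr0, pr2]

lemma Mθ2_gaHomog : Mθ2 (gaHomog k a b c d) = gaHomog k 0 0 a (-b) := by
  simp [Mθ2, gaHomog, mk4, pr0, pr1]

lemma sigmaGA_gaHomog : sigmaGA (gaHomog k a b c d) = gaHomog k a (-b) (-c) d := by
  simp [sigmaGA, gaHomog, mk4, pr0, pr1, pr2, pr3]

lemma homog_gaHomog :
    homog α n v (gaHomog k a b c d) = gaHomog (k + n)
      (-k * v .L * a + v .x * b - v .p * c)
      (k * v .y * a - ((k + (n + (α + 1)) / 2) * v .L + v .H) * b + v .F * c + v .p * d)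
      (k * v .h * a + v .E * b - ((k + (n + (α + 1)) / 2) * v .L - v .H) * c + v .x * d)
      ((k + n + (α + 1)) * (v .y * c - v .h * b - v .L * d)) := by
  have hk : k - 1 + (n + 1) = k + n := by ring
  simp only [homog_apply, Lop, Eop, Hop, Fop, xop, pop, hop, yop, LinearMap.add_apply,
    LinearMap.sub_apply, LinearMap.neg_apply, LinearMap.smul_apply, Module.End.mul_apply,
    Mt_gaHomog, Dt_gaHomog, Dθ1_gaHomog, Dθ2_gaHomog, Mθ1_gaHomog, Mθ2_gaHomog, gaHomog_add,
    gaHomog_sub, gaHomog_neg, gaHomog_smul, sub_add_cancel, add_sub_cancel_right, hk]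
  push_cast
  congr 1 <;> ring

end Action

variable (α : ℂ) (m n : ℤ) (v w : Family → ℂ)

/-- The coordinates of the image of the element with coordinates `v` under the parity
involution. -/
def parityCoord : Family → ℂ
  | .L => v .L
  | .E => v .E
  | .H => v .H
  | .F => v .F
  | .x => -v .x
  | .p => -v .p
  | .h => -v .h
  | .y => -v .y

lemma parityConj_homog :
    parityConj ℂ sigmaGA (homog α n v) = homog α n (parityCoord v) := by
  refine end_ext_gaHomog fun k a b c d => ?_
  simp only [parityConj_sigmaGA, Module.End.mul_apply, sigmaGA_gaHomog, homog_gaHomog, parityCoord]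
  congr 1 <;> ring

/-- The structure constants of `S'(2,α)`: the coordinates of the bracket of the elements of degrees
`m` and `n` with coordinates `v` and `w`. -/
def bracketCoord : Family → ℂ
  | .L => (m - n) * v .L * w .L - v .x * w .y + v .p * w .h - v .y * w .x + v .h * w .p
  | .E => m * v .E * w .L - n * v .L * w .E + 2 * (v .H * w .E - v .E * w .H)
      + (m - n - (α + 1)) * v .x * w .h + (n - m - (α + 1)) * v .h * w .x
  | .H => m * v .H * w .L - n * v .L * w .H + v .E * w .F - v .F * w .E
      + (n + (α + 1) - m) / 2 * (v .x * w .y + v .p * w .h)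
      + (m + (α + 1) - n) / 2 * (v .y * w .x + v .h * w .p)
  | .F => m * v .F * w .L - n * v .L * w .F - 2 * (v .H * w .F - v .F * w .H)
      + (n + (α + 1) - m) * v .p * w .y + (m + (α + 1) - n) * v .y * w .p
  | .x => ((m + (α + 1)) / 2 - n) * v .L * w .x - ((n + (α + 1)) / 2 - m) * v .x * w .L
      + v .E * w .p - v .p * w .E + v .H * w .x - v .x * w .H
  | .p => ((m + (α + 1)) / 2 - n) * v .L * w .p - ((n + (α + 1)) / 2 - m) * v .p * w .L
      + v .F * w .x - v .x * w .F - v .H * w .p + v .p * w .H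
  | .h => ((m - (α + 1)) / 2 - n) * v .L * w .h - ((n - (α + 1)) / 2 - m) * v .h * w .L
      + v .E * w .y - v .y * w .E + v .H * w .h - v .h * w .H
  | .y => ((m - (α + 1)) / 2 - n) * v .L * w .y - ((n - (α + 1)) / 2 - m) * v .y * w .L
      + v .F * w .h - v .h * w .F - v .H * w .y + v .y * w .H

lemma superCommutator_homog :
    superCommutator ℂ sigmaGA (homog α m v) (homog α n w)
      = homog α (m + n) (bracketCoord α m n v w) := by
  have hmn (k : ℤ) : k + n + m = k + m + n := by ring
  refine end_ext_gaHomog fun k a b c d => ?_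
  rw [superCommutator_apply, parityConj_homog, parityConj_homog]
  simp only [LinearMap.sub_apply, LinearMap.add_apply, LinearMap.smul_apply, Module.End.mul_apply,
    homog_gaHomog, gaHomog_add, gaHomog_sub, gaHomog_smul, parityCoord, bracketCoord, hmn,
    ← add_assoc]
  push_cast
  congr 1 <;> ring

/-- The functionals on operators that read off the coordinates of elements of degree `n`. -/
def genDual (n : ℤ) : Family → Module.Dual ℂ (Module.End ℂ GA)
  | .L => -(Finsupp.lapply (n + 1) ∘ₗ pr0 ∘ₗ LinearMap.applyₗ (gaHomog 1 1 0 0 0))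
  | .h => Finsupp.lapply (n + 1) ∘ₗ pr2 ∘ₗ LinearMap.applyₗ (gaHomog 1 1 0 0 0)
  | .y => Finsupp.lapply (n + 1) ∘ₗ pr1 ∘ₗ LinearMap.applyₗ (gaHomog 1 1 0 0 0)
  | .x => Finsupp.lapply n ∘ₗ pr0 ∘ₗ LinearMap.applyₗ (gaHomog 0 0 1 0 0)
  | .E => Finsupp.lapply n ∘ₗ pr2 ∘ₗ LinearMap.applyₗ (gaHomog 0 0 1 0 0)
  | .p => -(Finsupp.lapply n ∘ₗ pr0 ∘ₗ LinearMap.applyₗ (gaHomog 0 0 0 1 0))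
  | .F => Finsupp.lapply n ∘ₗ pr1 ∘ₗ LinearMap.applyₗ (gaHomog 0 0 0 1 0)
  | .H => (1 / 2 : ℂ) • (Finsupp.lapply n ∘ₗ pr2 ∘ₗ LinearMap.applyₗ (gaHomog 0 0 0 1 0)
      - Finsupp.lapply n ∘ₗ pr1 ∘ₗ LinearMap.applyₗ (gaHomog 0 0 1 0 0))

lemma genDual_homog (g : Family) :
    genDual n g (homog α m v) = if m = n then v g else 0 := by
  cases g <;> simp only [genDual, LinearMap.neg_apply, LinearMap.smul_apply, LinearMap.sub_apply,
    LinearMap.comp_apply, LinearMap.applyₗ_apply_apply, homog_gaHomog] <;>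
  by_cases hmn : m = n <;> simp [gaHomog, pr0, pr1, pr2, hmn, add_comm (1 : ℤ)]
  ring

lemma homog_single (g : Family) : homog α n (Pi.single g 1) = gen α n g := by
  simp [homog]

lemma linearIndependent_gen :
    LinearIndependent ℂ fun i : ℤ × Family => gen α i.1 i.2 := by
  have hdual (i : ℤ × Family) : genDual i.1 i.2 ∘ₗ Finsupp.linearCombination ℂ
      (fun j : ℤ × Family => gen α j.1 j.2) = Finsupp.lapply i := by
    refine Finsupp.lhom_ext' fun j => LinearMap.ext_ring ?_
    by_cases hn : j.1 = i.1 <;>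
      simp [← homog_single, genDual_homog, hn, Finsupp.single_apply, Pi.single_apply, Prod.ext_iff,
        eq_comm (a := i.2)]
  exact fun f f' hf => Finsupp.ext fun i => by
    simpa only [← LinearMap.comp_apply, hdual, Finsupp.lapply_apply] using
      congrArg (genDual i.1 i.2) hf

lemma s2Gen_eq_range : s2Gen α = Set.range fun i : ℤ × Family => gen α i.1 i.2 := by
  refine Set.Subset.antisymm ?_ ?_
  · rintro _ ⟨n, rfl | rfl | rfl | rfl | rfl | rfl | rfl | rfl⟩
    exacts [⟨(n, .L), rfl⟩, ⟨(n, .E), rfl⟩, ⟨(n, .H), rfl⟩, ⟨(n, .F), rfl⟩,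
      ⟨(n - 1, .h), gen_h α n⟩, ⟨(n + 1, .p), gen_p α n⟩, ⟨(n + 1, .x), gen_x α n⟩,
      ⟨(n - 1, .y), gen_y α n⟩]
  · rintro _ ⟨⟨n, g⟩, rfl⟩
    cases g
    exacts [⟨n, by simp [gen]⟩, ⟨n, by simp [gen]⟩, ⟨n, by simp [gen]⟩, ⟨n, by simp [gen]⟩,
      ⟨n - 1, by simp [gen]⟩, ⟨n - 1, by simp [gen]⟩, ⟨n + 1, by simp [gen]⟩,
      ⟨n + 1, by simp [gen]⟩]

lemma homog_mem_s2Span : homog α n v ∈ s2Span α := by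
  rw [s2Span, s2Gen_eq_range, homog, Fintype.linearCombination_apply]
  exact Submodule.sum_mem _ fun g _ =>
    Submodule.smul_mem _ _ (Submodule.subset_span ⟨(n, g), rfl⟩)

/-- The basis of `S'(2,α)` formed by its generators. -/
def s2Basis : Module.Basis (ℤ × Family) ℂ (s2Span α) :=
  (Module.Basis.span (linearIndependent_gen α)).map
    (LinearEquiv.ofEq _ _ (by rw [s2Span, s2Gen_eq_range]))

lemma coe_s2Basis (i : ℤ × Family) : (s2Basis α i : Module.End ℂ GA) = gen α i.1 i.2 := by
  simp [s2Basis, Module.Basis.span_apply]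

end Basis

section Bracket

/-- `Module.End ℂ GA` takes its additive group structure from `LinearMap`, and subtraction of
`GA` found that way is not reducibly the one compatible with the module structure that `s2Span α`
carries; here negation is multiplication by `-1`. -/
instance (α : ℂ) : AddCommGroup (s2Span α) := Module.addCommMonoidToAddCommGroup ℂ

lemma coe_neg_s2Span {α : ℂ} (x : s2Span α) :
    ((-x : s2Span α) : Module.End ℂ GA) = -(x : Module.End ℂ GA) :=
  neg_one_smul ℂ (x : Module.End ℂ GA)

variable (α : ℂ) (m n : ℤ) (v w : Family → ℂ)

/-- The element of `S'(2,α)` of degree `n` with coordinates `v` in the basis `s2Basis`. -/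
def s2Homog : (Family → ℂ) →ₗ[ℂ] s2Span α :=
  (homog α n).codRestrict (s2Span α) (homog_mem_s2Span α n)

lemma s2Homog_single (g : Family) : s2Homog α n (Pi.single g 1) = s2Basis α (n, g) :=
  Subtype.ext ((homog_single α n g).trans (coe_s2Basis α (n, g)).symm)

lemma repr_s2Homog (i : ℤ × Family) :
    (s2Basis α).repr (s2Homog α n v) i = if n = i.1 then v i.2 else 0 := by
  suffices (s2Basis α).coord i ∘ₗ s2Homog α n = if n = i.1 then LinearMap.proj i.2 else 0 by
    have h := LinearMap.congr_fun this v
    split_ifs at h ⊢ <;> simpa using h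
  refine LinearMap.pi_ext' fun g => LinearMap.ext_ring ?_
  by_cases hn : n = i.1 <;>
    simp [s2Homog_single, hn, Finsupp.single_apply, Pi.single_apply, Prod.ext_iff,
      eq_comm (a := g)]

variable {α} in
lemma map_mem_s2Span {T : Module.End ℂ (Module.End ℂ GA)} {τ : (Family → ℂ) → Family → ℂ}
    (hT : ∀ n v, T (homog α n v) = homog α n (τ v)) {x : Module.End ℂ GA} (hx : x ∈ s2Span α) :
    T x ∈ s2Span α := by
  rw [s2Span, s2Gen_eq_range] at hx
  refine (Submodule.span_le (p := (s2Span α).comap T)).mpr ?_ hx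
  refine Set.range_subset_iff.mpr fun i => ?_
  rw [← homog_single, SetLike.mem_coe, Submodule.mem_comap, hT]
  exact homog_mem_s2Span α i.1 _

variable {α} in
lemma superCommutator_mem_s2Span {x y : Module.End ℂ GA} (hx : x ∈ s2Span α) (hy : y ∈ s2Span α) :
    superCommutator ℂ sigmaGA x y ∈ s2Span α := by
  rw [s2Span, s2Gen_eq_range] at hx hy
  refine LinearMap.BilinMap.apply_apply_mem_of_mem_span _ _ _ _ ?_ x y hx hy
  refine Set.forall_mem_range.mpr fun i => Set.forall_mem_range.mpr fun j => ?_
  rw [← homog_single, ← homog_single, superCommutator_homog]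
  exact homog_mem_s2Span α _ _

/-- The parity involution of `S'(2,α)`. -/
def s2Parity : Module.End ℂ (s2Span α) :=
  (parityConj ℂ sigmaGA).restrict fun _ => map_mem_s2Span (parityConj_homog α)

/-- The bracket of `S'(2,α)`. -/
def s2Bracket : s2Span α →ₗ[ℂ] s2Span α →ₗ[ℂ] s2Span α :=
  LinearMap.mk₂ ℂ (fun x y => ⟨superCommutator ℂ sigmaGA x y, superCommutator_mem_s2Span x.2 y.2⟩)
    (fun _ _ _ => Subtype.ext (by simp)) (fun _ _ _ => Subtype.ext (by simp))
    (fun _ _ _ => Subtype.ext (by simp)) (fun _ _ _ => Subtype.ext (by simp))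

lemma coe_s2Parity (x : s2Span α) :
    (s2Parity α x : Module.End ℂ GA) = sigmaGA * x * sigmaGA := rfl

lemma s2Bracket_s2Homog :
    s2Bracket α (s2Homog α m v) (s2Homog α n w)
      = s2Homog α (m + n) (bracketCoord α m n v w) :=
  Subtype.ext (superCommutator_homog α m n v w)

lemma s2Bracket_s2Basis (i j : ℤ × Family) :
    s2Bracket α (s2Basis α i) (s2Basis α j) = s2Homog α (i.1 + j.1)
      (bracketCoord α i.1 j.1 (Pi.single i.2 1) (Pi.single j.2 1)) := by
  rw [← s2Bracket_s2Homog, s2Homog_single, s2Homog_single]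

end Bracket

section Derivations

variable {α : ℂ}

lemma isEvenDer_iff (D : Module.End ℂ (s2Span α)) :
    IsEvenDer α D ↔ IsSuperderivation (s2Bracket α) (s2Parity α) 0 D := by
  refine ⟨fun h => ⟨fun x => ?_, fun x y => Subtype.ext (h.2 x y _ rfl)⟩, fun h => ⟨?_, ?_⟩⟩
  · rw [pow_zero, one_smul]
    exact Subtype.ext (h.1 x _ rfl)
  · intro x z hz
    obtain rfl : z = s2Parity α x := Subtype.ext hz
    rw [h.apply_parity, pow_zero, one_smul, coe_s2Parity]
  · intro x y z hz
    obtain rfl : z = s2Bracket α x y := Subtype.ext hz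
    exact congrArg Subtype.val (h.leibniz x y)

lemma IsOddDer.isSuperderivation {D : Module.End ℂ (s2Span α)} (hD : IsOddDer α D) :
    IsSuperderivation (s2Bracket α) (s2Parity α) 1 D := by
  refine ⟨fun x => Subtype.ext ?_, fun x y => Subtype.ext (hD.2 x y _ rfl)⟩
  rw [hD.1 x (s2Parity α x) rfl, pow_one, neg_one_smul, coe_neg_s2Span, coe_s2Parity]

lemma isSuperderivation_s2Bracket_even {s : s2Span α} (hs : s2Parity α s = s) :
    IsSuperderivation (s2Bracket α) (s2Parity α) 0 (s2Bracket α s) := by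
  have h := isSuperderivation_superCommutator_even sigmaGA_mul_sigmaGA (congrArg Subtype.val hs)
  exact ⟨fun x => Subtype.ext (h.apply_parity x), fun x y => Subtype.ext (h.leibniz x y)⟩

lemma isSuperderivation_s2Bracket_odd {s : s2Span α} (hs : s2Parity α s = -s) :
    IsSuperderivation (s2Bracket α) (s2Parity α) 1 (s2Bracket α s) := by
  have hs' : parityConj ℂ sigmaGA s = -(s : Module.End ℂ GA) :=
    (congrArg Subtype.val hs).trans (coe_neg_s2Span s)
  have h := isSuperderivation_superCommutator_odd sigmaGA_mul_sigmaGA hs'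
  exact ⟨fun x => Subtype.ext (h.apply_parity x), fun x y => Subtype.ext (h.leibniz x y)⟩

lemma s2Bracket_eq_neg_of_even {y : s2Span α} (hy : s2Parity α y = y) (x : s2Span α) :
    s2Bracket α x y = -s2Bracket α y x := by
  have h := superCommutator_eq_neg_of_even (K := ℂ) (σ := sigmaGA) (congrArg Subtype.val hy) x.1
  refine Subtype.ext ?_
  rw [coe_neg_s2Span]
  exact h

end Derivations

section Weights

variable {α : ℂ}

namespace Family

/-- The eigenvalue of the outer derivation `𝖧` on a family. -/
def charge : Family → ℤ
  | L | E | H | F => 0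
  | x | p => 1
  | h | y => -1

/-- The eigenvalue of `ad H₀` on a family. -/
def spin : Family → ℤ
  | L | H => 0
  | E => 2
  | F => -2
  | x | h => 1
  | p | y => -1

lemma charge_sub_charge_dvd_two (g g' : Family) (hg : g.charge ≠ g'.charge) :
    g.charge - g'.charge ∣ 2 := by
  cases g <;> cases g' <;> simp_all [charge]

end Family

variable (α) in
/-- The eigenvalue of `ad ℒ₀` on the basis element with the given degree and family. -/
def energy (i : ℤ × Family) : ℂ := -i.1 + i.2.charge * ((α + 1) / 2)

/-- The weight of a basis element: its degree, charge and spin. -/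
def weight (i : ℤ × Family) : ℤ × ℤ × ℤ := (i.1, i.2.charge, i.2.spin)

lemma fst_eq_and_charge_eq_of_energy_eq (hα : ∀ k : ℤ, α ≠ k) {i j : ℤ × Family}
    (h : energy α i = energy α j) : i.1 = j.1 ∧ i.2.charge = j.2.charge := by
  obtain hc | hc := eq_or_ne i.2.charge j.2.charge
  · exact ⟨by simpa [energy, hc] using h, hc⟩
  obtain ⟨q, hq⟩ := i.2.charge_sub_charge_dvd_two j.2 hc
  have hq' : (i.2.charge - j.2.charge) * q = (2 : ℂ) := by exact_mod_cast hq.symm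
  refine absurd ?_ (hα ((i.1 - j.1) * q - 1))
  rw [energy, energy] at h
  push_cast
  linear_combination q * h - (α + 1) / 2 * hq'

lemma s2Parity_s2Basis (i : ℤ × Family) :
    s2Parity α (s2Basis α i) = (-1 : ℂ) ^ i.2.charge • s2Basis α i := by
  obtain ⟨n, g⟩ := i
  have h (v : Family → ℂ) : s2Parity α (s2Homog α n v) = s2Homog α n (parityCoord v) :=
    Subtype.ext (parityConj_homog α n v)
  rw [← s2Homog_single, h, ← map_smul]
  congr 1
  funext g'
  cases g <;> cases g' <;> simp [parityCoord, Family.charge]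

lemma s2Bracket_L_zero (i : ℤ × Family) :
    s2Bracket α (s2Basis α (0, .L)) (s2Basis α i) = energy α i • s2Basis α i := by
  obtain ⟨n, g⟩ := i
  rw [s2Bracket_s2Basis, ← s2Homog_single, ← map_smul]
  dsimp only
  rw [zero_add]
  congr 1
  funext g'
  cases g <;> cases g' <;> simp [bracketCoord, energy, Family.charge] <;> ring

lemma s2Bracket_H_zero (i : ℤ × Family) :
    s2Bracket α (s2Basis α (0, .H)) (s2Basis α i) = (i.2.spin : ℂ) • s2Basis α i := by
  obtain ⟨n, g⟩ := i
  rw [s2Bracket_s2Basis, ← s2Homog_single, ← map_smul]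
  dsimp only
  rw [zero_add]
  congr 1
  funext g'
  cases g <;> cases g' <;> simp [bracketCoord, Family.spin]

lemma repr_s2Bracket_s2Basis_self (u : s2Span α) (i : ℤ × Family) :
    (s2Basis α).repr (s2Bracket α u (s2Basis α i)) i
      = energy α i * (s2Basis α).repr u (0, .L) + i.2.spin * (s2Basis α).repr u (0, .H) := by
  suffices (s2Basis α).coord i ∘ₗ (s2Bracket α).flip (s2Basis α i)
      = energy α i • (s2Basis α).coord (0, .L) + (i.2.spin : ℂ) • (s2Basis α).coord (0, .H) from
    LinearMap.congr_fun this u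
  refine (s2Basis α).ext fun ⟨m, g⟩ => ?_
  obtain ⟨n, g'⟩ := i
  simp only [LinearMap.comp_apply, LinearMap.flip_apply, Module.Basis.coord_apply,
    s2Bracket_s2Basis, repr_s2Homog, LinearMap.add_apply, LinearMap.smul_apply,
    Module.Basis.repr_self, add_eq_right]
  by_cases hm : m = 0
  · subst hm
    cases g <;> cases g' <;>
      simp [bracketCoord, energy, Family.charge, Family.spin] <;> ring
  · simp [hm]

lemma eq_of_weight_eq {i j : ℤ × Family} (h : weight i = weight j) (hs : i.2.spin ≠ 0) :
    i = j := by
  obtain ⟨m, g⟩ := i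
  obtain ⟨n, g'⟩ := j
  cases g <;> cases g' <;> simp_all [weight, Family.charge, Family.spin]

/-- `z` is `ℒ₀ + cH₀` for a generic `c`. -/
lemma exists_ad_eq_smul_separating_weights (hα : ∀ k : ℤ, α ≠ k) :
    ∃ (z : s2Span α) (a : ℤ × Family → ℂ), s2Parity α z = z ∧
      a (0, .L) = 0 ∧ (∀ i, s2Bracket α z (s2Basis α i) = a i • s2Basis α i) ∧
      ∀ i j, a i = a j → weight i = weight j := by
  have : Uncountable ℂ := Complex.ofReal_injective.uncountable
  obtain ⟨c, hc⟩ := exists_forall_add_mul_injective (energy α) fun i => (i.2.spin : ℂ)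
  refine ⟨s2Basis α (0, .L) + c • s2Basis α (0, .H), fun i => energy α i + c * i.2.spin,
    ?_, ?_, fun i => ?_, fun i j hij => ?_⟩
  · simp [s2Parity_s2Basis, Family.charge]
  · simp [energy, Family.charge, Family.spin]
  · simp [s2Bracket_L_zero, s2Bracket_H_zero, add_smul, mul_smul]
  · obtain ⟨henergy, hspin⟩ := hc i j hij
    obtain ⟨hn, hcharge⟩ := fst_eq_and_charge_eq_of_energy_eq hα henergy
    exact Prod.ext hn (Prod.ext hcharge (by exact_mod_cast hspin))

/-- An operator preserves weights if its matrix in the basis `s2Basis` is block diagonal with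
respect to the weights of the basis elements. -/
def PreservesWeights (D : Module.End ℂ (s2Span α)) : Prop :=
  ∀ i j, weight j ≠ weight i → (s2Basis α).repr (D (s2Basis α j)) i = 0

lemma exists_preservesWeights_sub (hα : ∀ k : ℤ, α ≠ k) {p : ℕ} {D : Module.End ℂ (s2Span α)}
    (hD : IsSuperderivation (s2Bracket α) (s2Parity α) p D)
    (had : ∀ s, s2Parity α s = (-1 : ℂ) ^ p • s →
      IsSuperderivation (s2Bracket α) (s2Parity α) p (s2Bracket α s)) :
    ∃ s, IsSuperderivation (s2Bracket α) (s2Parity α) p (D - s2Bracket α s) ∧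
      PreservesWeights (D - s2Bracket α s) := by
  obtain ⟨z, a, hz, haL, hza, ha⟩ := exists_ad_eq_smul_separating_weights hα
  have hself (i) := hD.repr_mul_apply_self_eq_zero (s2Basis α) hz hza i
  simp only [repr_s2Bracket_s2Basis_self] at hself
  have hL : (s2Basis α).repr (D z) (0, .L) = 0 := by
    simpa [energy, Family.charge, Family.spin] using hself (1, .L)
  have hH : (s2Basis α).repr (D z) (0, .H) = 0 := by
    simpa [energy, Family.charge, Family.spin] using hself (0, .E)
  have h0 (i) (hi : a i = 0) : (s2Basis α).repr (D z) i = 0 := by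
    have hw := ha (0, .L) i (haL.trans hi.symm)
    obtain ⟨n, g⟩ := i
    obtain rfl : 0 = n := congrArg Prod.fst hw
    cases g <;> first | assumption | simp [weight, Family.charge, Family.spin] at hw
  obtain ⟨s, hs, hcomm⟩ := hD.exists_sub_ad_commute (s2Basis α) had hz s2Parity_s2Basis hza
    (s2Bracket_eq_neg_of_even hz) h0
  exact ⟨s, hs, fun i j hij => repr_apply_eq_zero_of_intertwines (s2Basis α) hza hza hcomm
    (mt (ha j i) hij)⟩

lemma eq_zero_of_isSuperderivation_one_of_preservesWeights {D : Module.End ℂ (s2Span α)}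
    (hD : IsSuperderivation (s2Bracket α) (s2Parity α) 1 D) (hw : PreservesWeights D) : D = 0 := by
  refine (s2Basis α).ext fun j => (s2Basis α).ext_elem fun i => ?_
  rw [LinearMap.zero_apply, map_zero, Finsupp.zero_apply]
  by_cases hij : weight j = weight i
  · have hcharge : j.2.charge = i.2.charge := congrArg (·.2.1) hij
    refine repr_apply_eq_zero_of_intertwines (s2Basis α) s2Parity_s2Basis
      (A' := -s2Parity α) (a' := fun i => -(-1) ^ i.2.charge) (fun i => ?_) (fun v => ?_) ?_
    · rw [LinearMap.neg_apply, s2Parity_s2Basis, neg_smul]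
    · rw [hD.apply_parity, pow_one, neg_one_smul, LinearMap.neg_apply]
    · rw [hcharge]
      exact self_ne_neg.mpr (zpow_ne_zero _ (by norm_num))
  · exact hw i j hij

end Weights

section EvenDerivations

variable {α : ℂ} {D : Module.End ℂ (s2Span α)}

lemma repr_s2Bracket_s2Basis (i j : ℤ × Family) (g : Family) :
    (s2Basis α).repr (s2Bracket α (s2Basis α i) (s2Basis α j)) (i.1 + j.1, g)
      = bracketCoord α i.1 j.1 (Pi.single i.2 1) (Pi.single j.2 1) g := by
  simp [s2Bracket_s2Basis, repr_s2Homog]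

lemma s2Bracket_E_F (n : ℤ) :
    s2Bracket α (s2Basis α (n, .E)) (s2Basis α (0, .F)) = s2Basis α (n, .H) := by
  rw [s2Bracket_s2Basis, ← s2Homog_single]
  dsimp only
  rw [add_zero]
  congr 1
  funext g
  cases g <;> simp [bracketCoord]

lemma s2Bracket_p_h_sub_s2Bracket_x_y (n : ℤ) :
    s2Bracket α (s2Basis α (0, .p)) (s2Basis α (n, .h))
      - s2Bracket α (s2Basis α (0, .x)) (s2Basis α (n, .y)) = (2 : ℂ) • s2Basis α (n, .L) := by
  rw [s2Bracket_s2Basis, s2Bracket_s2Basis, ← s2Homog_single]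
  dsimp only
  rw [zero_add, ← map_sub, ← map_smul]
  congr 1
  funext g
  cases g <;> simp [bracketCoord]
  ring

namespace PreservesWeights

lemma apply_s2Basis (hw : PreservesWeights D) (n : ℤ) {g : Family} (hg : g.spin ≠ 0) :
    D (s2Basis α (n, g)) = (s2Basis α).repr (D (s2Basis α (n, g))) (n, g) • s2Basis α (n, g) :=
  apply_eq_smul_of_repr_eq_zero (s2Basis α) fun j hj =>
    hw j (n, g) fun h => hj (eq_of_weight_eq h hg).symm

lemma repr_apply (hw : PreservesWeights D) {n : ℤ} {g : Family} (hg : g.spin ≠ 0)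
    (v : s2Span α) :
    (s2Basis α).repr (D v) (n, g)
      = (s2Basis α).repr (D (s2Basis α (n, g))) (n, g) * (s2Basis α).repr v (n, g) := by
  suffices (s2Basis α).coord (n, g) ∘ₗ D
      = (s2Basis α).repr (D (s2Basis α (n, g))) (n, g) • (s2Basis α).coord (n, g) from
    LinearMap.congr_fun this v
  refine (s2Basis α).ext fun j => ?_
  obtain rfl | hj := eq_or_ne j (n, g)
  · simp
  · simp [hj, hw (n, g) j fun h => hj (eq_of_weight_eq h.symm hg).symm]

lemma repr_apply_self_add (hw : PreservesWeights D)
    (hD : IsSuperderivation (s2Bracket α) (s2Parity α) 0 D) (m n : ℤ) {g g' k : Family}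
    (hg : g.spin ≠ 0) (hg' : g'.spin ≠ 0) (hk : k.spin ≠ 0)
    (h : bracketCoord α m n (Pi.single g 1) (Pi.single g' 1) k ≠ 0) :
    (s2Basis α).repr (D (s2Basis α (m + n, k))) (m + n, k)
      = (s2Basis α).repr (D (s2Basis α (m, g))) (m, g)
        + (s2Basis α).repr (D (s2Basis α (n, g'))) (n, g') :=
  hD.eigenvalue_eq_add (s2Basis α) (hw.repr_apply hk) (hw.apply_s2Basis m hg)
    (hw.apply_s2Basis n hg') (by rwa [repr_s2Bracket_s2Basis (m, g) (n, g')])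

/-- Off the families `ℒ` and `H` the weight spaces are lines; the relations `H_n = [E_n, F_0]` and
`2ℒ_n = [𝔭_{-1}, 𝔥_{n+1}] - [𝔵_{-1}, 𝔶_{n+1}]` take care of the rest. -/
lemma exists_apply_s2Basis_eq_smul (hw : PreservesWeights D)
    (hD : IsSuperderivation (s2Bracket α) (s2Parity α) 0 D) (i : ℤ × Family) :
    ∃ r : ℂ, D (s2Basis α i) = r • s2Basis α i := by
  obtain ⟨n, g⟩ := i
  by_cases hg : g.spin ≠ 0
  · exact ⟨_, hw.apply_s2Basis n hg⟩
  have hp := hw.apply_s2Basis 0 (g := .p) (by decide)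
  have hx := hw.apply_s2Basis 0 (g := .x) (by decide)
  have hh := hw.apply_s2Basis n (g := .h) (by decide)
  have hy := hw.apply_s2Basis n (g := .y) (by decide)
  have hE := hw.apply_s2Basis n (g := .E) (by decide)
  have hF := hw.apply_s2Basis 0 (g := .F) (by decide)
  have hEp := hw.repr_apply_self_add hD 0 0 (g := .E) (g' := .p) (k := .x) (by decide) (by decide)
    (by decide) (by simp [bracketCoord])
  have hEy := hw.repr_apply_self_add hD 0 n (g := .E) (g' := .y) (k := .h) (by decide) (by decide)
    (by decide) (by simp [bracketCoord])
  simp only [zero_add] at hEp hEy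
  rw [hEp] at hx
  rw [hEy] at hh
  have hph := hD.apply_mul_of_eigen hp hh
  have hxy := hD.apply_mul_of_eigen hx hy
  rw [add_right_comm, add_comm (_ + _)] at hxy
  cases g
  case L =>
    have hL := congrArg₂ (· - ·) hph hxy
    rw [← map_sub, ← smul_sub, s2Bracket_p_h_sub_s2Bracket_x_y, map_smul, smul_comm] at hL
    exact ⟨_, smul_right_injective _ (two_ne_zero' ℂ) hL⟩
  case H =>
    exact ⟨_, by rw [← s2Bracket_E_F, hD.apply_mul_of_eigen hE hF]⟩
  all_goals exact absurd (by decide) hg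

end PreservesWeights

lemma eigenvalue_add (hD : IsSuperderivation (s2Bracket α) (s2Parity α) 0 D)
    {d : ℤ × Family → ℂ} (hd : ∀ i, D (s2Basis α i) = d i • s2Basis α i) (i j : ℤ × Family)
    (g : Family) (h : bracketCoord α i.1 j.1 (Pi.single i.2 1) (Pi.single j.2 1) g ≠ 0) :
    d (i.1 + j.1, g) = d i + d j :=
  hD.eigenvalue_eq_add (s2Basis α)
    (fun v => repr_apply_of_forall_apply_eq_smul (s2Basis α) hd v _) (hd i) (hd j)
    (by rwa [repr_s2Bracket_s2Basis])

/-- The three parameters are those of the derivations `𝖧`, `ad ℒ₀` and `ad H₀`. -/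
lemma exists_eq_of_additive (hα : α + 1 ≠ 0) {d : ℤ × Family → ℂ}
    (hadd : ∀ (i j : ℤ × Family) (g : Family),
      bracketCoord α i.1 j.1 (Pi.single i.2 1) (Pi.single j.2 1) g ≠ 0 →
        d (i.1 + j.1, g) = d i + d j) :
    ∃ c κ ε : ℂ, ∀ i, d i = c * i.2.charge + κ * energy α i + ε * i.2.spin := by
  have hHE (m n : ℤ) : d (m + n, .E) = d (m, .H) + d (n, .E) :=
    hadd (m, .H) (n, .E) .E (by simp [bracketCoord])
  let k : ℤ →+ ℂ := AddMonoidHom.mk' (fun n => d (n, .H)) fun m n => by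
    have h := hHE (m + n) 0
    rw [add_assoc, hHE, hHE] at h
    linear_combination -h
  have hH (n : ℤ) : d (n, .H) = n * d (1, .H) := by
    simpa [k] using map_zsmul k n 1
  have hE (n : ℤ) : d (n, .E) = d (n, .H) + d (0, .E) := by simpa using hHE n 0
  have hx (n : ℤ) : d (n, .x) = d (n, .H) + d (0, .x) := by
    simpa using hadd (n, .H) (0, .x) .x (by simp [bracketCoord])
  have hh (n : ℤ) : d (n, .h) = d (n, .H) + d (0, .h) := by
    simpa using hadd (n, .H) (0, .h) .h (by simp [bracketCoord])
  have hF (n : ℤ) : d (n, .H) = d (0, .E) + d (n, .F) := by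
    simpa using hadd (0, .E) (n, .F) .H (by simp [bracketCoord])
  have hp (n : ℤ) : d (n, .x) = d (0, .E) + d (n, .p) := by
    simpa using hadd (0, .E) (n, .p) .x (by simp [bracketCoord])
  have hy (n : ℤ) : d (n, .h) = d (0, .E) + d (n, .y) := by
    simpa using hadd (0, .E) (n, .y) .h (by simp [bracketCoord])
  have hL (n : ℤ) : d (n + 1, .H) = d (n, .L) + d (1, .H) :=
    hadd (n, .L) (1, .H) .H (by simp [bracketCoord])
  have hxh : d (0, .E) = d (0, .x) + d (0, .h) := by
    simpa using hadd (0, .x) (0, .h) .E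
      (by simpa [bracketCoord, sub_eq_add_neg, add_comm] using neg_ne_zero.mpr hα)
  refine ⟨(d (0, .x) - d (0, .h) + d (1, .H) * (α + 1)) / 2, -d (1, .H), d (0, .E) / 2, ?_⟩
  rintro ⟨n, g⟩
  cases g <;> simp only [energy, Family.charge, Family.spin] <;> push_cast
  · have := hH (n + 1)
    push_cast at this
    linear_combination this - hL n
  · linear_combination hE n + hH n
  · linear_combination hH n
  · linear_combination hH n - hF n
  · linear_combination hx n + hH n - hxh / 2
  · linear_combination -hp n + hx n + hH n - hxh / 2
  · linear_combination hh n + hH n - hxh / 2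
  · linear_combination -hy n + hh n + hH n - hxh / 2

end EvenDerivations

section OuterDerivation

/-- The operator `-(θ₁∂₁ + θ₂∂₂)` on `A`, the negative of the Euler field of the odd variables. It
is not divergence free, but it normalizes `S'(2,α)` and induces the derivation `𝖧` there. -/
def negEuler : Module.End ℂ GA := -(Mθ1 * Dθ1 + Mθ2 * Dθ2)

lemma negEuler_gaHomog (k : ℤ) (a b c d : ℂ) :
    negEuler (gaHomog k a b c d) = gaHomog k 0 (-b) (-c) (-2 * d) := by
  simp only [negEuler, LinearMap.neg_apply, LinearMap.add_apply, Module.End.mul_apply,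
    Dθ1_gaHomog, Dθ2_gaHomog, Mθ1_gaHomog, Mθ2_gaHomog, gaHomog_add, gaHomog_neg]
  congr 1 <;> ring

lemma parityConj_negEuler : parityConj ℂ sigmaGA negEuler = negEuler := by
  refine end_ext_gaHomog fun k a b c d => ?_
  simp [parityConj_sigmaGA, Module.End.mul_apply, sigmaGA_gaHomog, negEuler_gaHomog]

variable (α : ℂ)

lemma superCommutator_negEuler_homog (n : ℤ) (v : Family → ℂ) :
    superCommutator ℂ sigmaGA negEuler (homog α n v) = homog α n fun g => g.charge * v g := by
  rw [superCommutator_apply_of_even parityConj_negEuler]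
  refine end_ext_gaHomog fun k a b c d => ?_
  simp only [LinearMap.sub_apply, Module.End.mul_apply, negEuler_gaHomog, homog_gaHomog,
    gaHomog_sub, Family.charge]
  push_cast
  congr 1 <;> ring

lemma superCommutator_negEuler_gen (i : ℤ × Family) :
    superCommutator ℂ sigmaGA negEuler (gen α i.1 i.2)
      = (i.2.charge : ℂ) • gen α i.1 i.2 := by
  rw [← homog_single, superCommutator_negEuler_homog, ← map_smul]
  congr 1
  funext g
  by_cases hg : g = i.2 <;> simp [hg]

/-- The derivation `𝖧` of `S'(2,α)`. -/
def outerDer : Module.End ℂ (s2Span α) :=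
  (superCommutator ℂ sigmaGA negEuler).restrict fun _ =>
    map_mem_s2Span (superCommutator_negEuler_homog α)

lemma isEvenDer_outerDer : IsEvenDer α (outerDer α) := by
  have h := isSuperderivation_superCommutator_even sigmaGA_mul_sigmaGA parityConj_negEuler
  rw [isEvenDer_iff]
  exact ⟨fun x => Subtype.ext (h.apply_parity x), fun x y => Subtype.ext (h.leibniz x y)⟩

lemma outerDer_s2Basis (i : ℤ × Family) :
    outerDer α (s2Basis α i) = (i.2.charge : ℂ) • s2Basis α i := by
  refine Subtype.ext ?_
  rw [Submodule.coe_smul, coe_s2Basis, ← superCommutator_negEuler_gen, ← coe_s2Basis]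
  rfl

variable {α}

lemma coe_outerDer_of_coe_eq_gen {n : ℤ} {g : Family} {z : s2Span α}
    (hz : (z : Module.End ℂ GA) = gen α n g) :
    (outerDer α z : Module.End ℂ GA) = (g.charge : ℂ) • gen α n g := by
  obtain rfl : z = s2Basis α (n, g) := Subtype.ext (hz.trans (coe_s2Basis α (n, g)).symm)
  rw [outerDer_s2Basis, Submodule.coe_smul, coe_s2Basis]

lemma coe_outerDer_of_charge_eq_zero {n : ℤ} {g : Family} (hg : g.charge = 0)
    {T : Module.End ℂ GA} (hT : gen α n g = T) {z : s2Span α} (hz : (z : Module.End ℂ GA) = T) :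
    (outerDer α z : Module.End ℂ GA) = 0 := by
  rw [coe_outerDer_of_coe_eq_gen (hz.trans hT.symm), hg, Int.cast_zero]
  exact zero_smul ℂ _

lemma coe_outerDer_of_charge_eq_one {n : ℤ} {g : Family} (hg : g.charge = 1)
    {T : Module.End ℂ GA} (hT : gen α n g = T) {z : s2Span α} (hz : (z : Module.End ℂ GA) = T) :
    (outerDer α z : Module.End ℂ GA) = T := by
  rw [coe_outerDer_of_coe_eq_gen (hz.trans hT.symm), hg, Int.cast_one, hT]
  exact one_smul ℂ T

lemma coe_outerDer_of_charge_eq_neg_one {n : ℤ} {g : Family} (hg : g.charge = -1)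
    {T : Module.End ℂ GA} (hT : gen α n g = T) {z : s2Span α} (hz : (z : Module.End ℂ GA) = T) :
    (outerDer α z : Module.End ℂ GA) = -T := by
  rw [coe_outerDer_of_coe_eq_gen (hz.trans hT.symm), hg, Int.cast_neg, Int.cast_one, hT]
  exact neg_one_smul ℂ T

lemma eq_zero_of_smul_outerDer_eq_s2Bracket {c : ℂ} {s : s2Span α}
    (h : c • outerDer α = s2Bracket α s) : c = 0 := by
  have hself (i : ℤ × Family) : c * i.2.charge
      = energy α i * (s2Basis α).repr s (0, .L) + i.2.spin * (s2Basis α).repr s (0, .H) := by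
    rw [← repr_s2Bracket_s2Basis_self, ← h]
    simp [outerDer_s2Basis]
  have hL : (s2Basis α).repr s (0, .L) = 0 := by
    simpa [energy, Family.charge, Family.spin] using hself (1, .L)
  have hH : (s2Basis α).repr s (0, .H) = 0 := by
    simpa [energy, Family.charge, Family.spin] using hself (0, .E)
  simpa [hL, hH, Family.charge] using hself (0, .x)

lemma IsEvenDer.exists_eq_smul_outerDer_add_s2Bracket (hα : ∀ k : ℤ, α ≠ k)
    {D : Module.End ℂ (s2Span α)} (hD : IsEvenDer α D) :
    ∃ (c : ℂ) (s : s2Span α), D = c • outerDer α + s2Bracket α s := by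
  rw [isEvenDer_iff] at hD
  obtain ⟨s, hD', hw⟩ := exists_preservesWeights_sub hα hD fun s hs =>
    isSuperderivation_s2Bracket_even (by simpa using hs)
  choose d hd using hw.exists_apply_s2Basis_eq_smul hD'
  have hα' : α + 1 ≠ 0 := fun h => hα (-1) (by simpa using eq_neg_of_add_eq_zero_left h)
  obtain ⟨c, κ, ε, hd'⟩ := exists_eq_of_additive hα' (eigenvalue_add hD' hd)
  refine ⟨c, s + κ • s2Basis α (0, .L) + ε • s2Basis α (0, .H), (s2Basis α).ext fun i => ?_⟩
  have hDi : D (s2Basis α i) = d i • s2Basis α i + s2Bracket α s (s2Basis α i) :=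
    sub_eq_iff_eq_add.mp (hd i)
  simp only [hDi, hd', LinearMap.add_apply, LinearMap.smul_apply, map_add, map_smul,
    outerDer_s2Basis, s2Bracket_L_zero, s2Bracket_H_zero]
  module

lemma IsOddDer.exists_eq_s2Bracket (hα : ∀ k : ℤ, α ≠ k) {D : Module.End ℂ (s2Span α)}
    (hD : IsOddDer α D) : ∃ s : s2Span α, D = s2Bracket α s := by
  obtain ⟨s, hD', hw⟩ := exists_preservesWeights_sub hα hD.isSuperderivation fun s hs =>
    isSuperderivation_s2Bracket_odd (by simpa using hs)
  exact ⟨s, sub_eq_zero.mp (eq_zero_of_isSuperderivation_one_of_preservesWeights hD' hw)⟩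

lemma IsSuperDer.exists_eq_smul_outerDer_add_s2Bracket (hα : ∀ k : ℤ, α ≠ k)
    {D : Module.End ℂ (s2Span α)} (hD : IsSuperDer α D) :
    ∃ (c : ℂ) (s : s2Span α), D = c • outerDer α + s2Bracket α s := by
  obtain ⟨De, Do, rfl, hDe, hDo⟩ := hD
  obtain ⟨c, s, rfl⟩ := hDe.exists_eq_smul_outerDer_add_s2Bracket hα
  obtain ⟨s', rfl⟩ := hDo.exists_eq_s2Bracket hα
  exact ⟨c, s + s', by rw [map_add, add_assoc]⟩

end OuterDerivation

/-- For `α ∈ ℂ∖ℤ`, the Lie superalgebra of exterior derivations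
`Der_ext S'(2,α) = Der S'(2,α)/Inn S'(2,α)` is one-dimensional, spanned by the class
of the even derivation `𝖧` with `𝖧(𝔵_k) = 𝔵_k`, `𝖧(𝔥_k^α) = −𝔥_k^α`,
`𝖧(𝔭_k) = 𝔭_k`, `𝖧(𝔶_k^α) = −𝔶_k^α` and `𝖧(ℒ_n^α) = 𝖧(E_n) = 𝖧(H_n) = 𝖧(F_n) = 0`. -/
theorem exterior_derivations_nonintegral_alpha (α : ℂ) (hα : ∀ k : ℤ, α ≠ (k : ℂ)) :
    ∃ DH : ↥(s2Span α) →ₗ[ℂ] ↥(s2Span α),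
      IsEvenDer α DH ∧
      -- the defining values of `𝖧` on the basis
      (∀ (k : ℤ) (z : ↥(s2Span α)), (z : Module.End ℂ GA) = xop k →
        ((DH z : Module.End ℂ GA)) = xop k) ∧
      (∀ (k : ℤ) (z : ↥(s2Span α)), (z : Module.End ℂ GA) = hop α k →
        ((DH z : Module.End ℂ GA)) = -hop α k) ∧
      (∀ (k : ℤ) (z : ↥(s2Span α)), (z : Module.End ℂ GA) = pop k →
        ((DH z : Module.End ℂ GA)) = pop k) ∧
      (∀ (k : ℤ) (z : ↥(s2Span α)), (z : Module.End ℂ GA) = yop α k →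
        ((DH z : Module.End ℂ GA)) = -yop α k) ∧
      (∀ (n : ℤ) (z : ↥(s2Span α)), (z : Module.End ℂ GA) = Lop α n →
        ((DH z : Module.End ℂ GA)) = 0) ∧
      (∀ (n : ℤ) (z : ↥(s2Span α)), (z : Module.End ℂ GA) = Eop n →
        ((DH z : Module.End ℂ GA)) = 0) ∧
      (∀ (n : ℤ) (z : ↥(s2Span α)), (z : Module.End ℂ GA) = Hop n →
        ((DH z : Module.End ℂ GA)) = 0) ∧
      (∀ (n : ℤ) (z : ↥(s2Span α)), (z : Module.End ℂ GA) = Fop n →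
        ((DH z : Module.End ℂ GA)) = 0) ∧
      -- the class of `𝖧` spans `Der_ext S'(2,α)` …
      (∀ D : ↥(s2Span α) →ₗ[ℂ] ↥(s2Span α), IsSuperDer α D →
        ∃ (c : ℂ) (s : ↥(s2Span α)), ∀ x : ↥(s2Span α),
          ((D x : Module.End ℂ GA)) = c • ((DH x : Module.End ℂ GA))
            + sbr (s : Module.End ℂ GA) (x : Module.End ℂ GA)) ∧
      -- … and the class of `𝖧` is nonzero, so `Der_ext S'(2,α)` is one-dimensional
      (∀ (c : ℂ) (s : ↥(s2Span α)),
        (∀ x : ↥(s2Span α), c • ((DH x : Module.End ℂ GA))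
          = sbr (s : Module.End ℂ GA) (x : Module.End ℂ GA)) → c = 0) := by
  refine ⟨outerDer α, isEvenDer_outerDer α,
    fun k _ => coe_outerDer_of_charge_eq_one rfl (gen_x α k),
    fun k _ => coe_outerDer_of_charge_eq_neg_one rfl (gen_h α k),
    fun k _ => coe_outerDer_of_charge_eq_one rfl (gen_p α k),
    fun k _ => coe_outerDer_of_charge_eq_neg_one rfl (gen_y α k),
    fun n _ => coe_outerDer_of_charge_eq_zero (n := n) (g := .L) rfl rfl,
    fun n _ => coe_outerDer_of_charge_eq_zero (n := n) (g := .E) rfl rfl,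
    fun n _ => coe_outerDer_of_charge_eq_zero (n := n) (g := .H) rfl rfl,
    fun n _ => coe_outerDer_of_charge_eq_zero (n := n) (g := .F) rfl rfl,
    fun D hD => ?_, fun c s h => ?_⟩
  · obtain ⟨c, s, rfl⟩ := hD.exists_eq_smul_outerDer_add_s2Bracket hα
    exact ⟨c, s, fun _ => rfl⟩
  · exact eq_zero_of_smul_outerDer_eq_s2Bracket (LinearMap.ext fun x => Subtype.ext (h x))
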